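/- Let Ω ⊆ ℝ^N be an open set and let f : ℝ^N → ℝ be continuously differentiable on Ω, with f and all its partial derivatives ∂f/∂x_d integrable on Ω. Then the total variation of f on Ω, defined as V(f; Ω) := sup { ∫_Ω f(x) · div φ(x) dx : φ ∈ C_c^∞(Ω, ℝ^N), ‖φ(x)‖_∞ ≤ 1 for all x ∈ Ω }, satisfies V(f; Ω) = Σ_{d=1}^N ∫_Ω |∂f/∂x_d (x)| dx. -/

import Mathlib

/-!
For a test field `φ`, integration by parts gives `∫_Ω f div φ = -∑_d ∫_Ω ∂_d f φ_d`, which is at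
most `∑_d ∫_Ω |∂_d f|` because `|φ_d| ≤ 1`. The constraint `‖φ‖_∞ ≤ 1` decouples the coordinates,
so equality reduces to the `L¹`-`L^∞` duality `∫_Ω |g| = sup_ψ ∫_Ω g ψ`, where `ψ` ranges over the
test functions with `|ψ| ≤ 1`. For continuous `g` the sign of `g` is a pointwise limit of such `ψ`,
because `{g > 0}` and `{g < 0}` are open; continuous functions being dense in `L¹`, the case of an
arbitrary integrable `g` follows.
-/

open MeasureTheory

open Set Filter Topology TopologicalSpace
open scoped Distributions

section Cutoff

variable {E : Type*} [NormedAddCommGroup E] [NormedSpace ℝ E] [FiniteDimensional ℝ E]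

theorem exists_testFunction_eqOn_one {K : Set E} (hK : IsCompact K) {U : Opens E} (hKU : K ⊆ U) :
    ∃ ψ : 𝓓(U, ℝ), (∀ x, ψ x ∈ Icc 0 1) ∧ EqOn ψ 1 K := by
  obtain ⟨L, hL, hKL, hLU⟩ := exists_compact_between hK U.isOpen hKU
  obtain ⟨ψ, hψ, hrange, hsupp, hone⟩ := exists_contMDiff_support_eq_eq_one_iff
    (modelWithCornersSelf ℝ E) (n := ⊤) isOpen_interior hK.isClosed hKL
  have htsupp : tsupport ψ ⊆ L :=
    closure_minimal (hsupp.subset.trans interior_subset) hL.isClosed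
  exact ⟨⟨ψ, hψ.contDiff, hL.of_isClosed_subset (isClosed_tsupport _) htsupp, htsupp.trans hLU⟩,
    fun x => hrange ⟨x, rfl⟩, fun x hx => (hone x).1 hx⟩

theorem exists_seq_testFunction_tendsto_indicator (U : Opens E) :
    ∃ ψ : ℕ → 𝓓(U, ℝ), (∀ n x, ψ n x ∈ Icc 0 1) ∧
      ∀ x, Tendsto (fun n => ψ n x) atTop (𝓝 ((U : Set E).indicator 1 x)) := by
  have : LocallyCompactSpace U := U.isOpen.locallyCompactSpace
  have hK : ∀ n, IsCompact (Subtype.val '' compactCovering U n) := fun n =>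
    (isCompact_compactCovering U n).image continuous_subtype_val
  choose ψ hψ hone using fun n =>
    exists_testFunction_eqOn_one (hK n) (U := U) (Subtype.coe_image_subset _ _)
  refine ⟨ψ, hψ, fun x => ?_⟩
  by_cases hx : x ∈ U
  · obtain ⟨N, hN⟩ := exists_mem_compactCovering (⟨x, hx⟩ : U)
    have heq : ∀ n ≥ N, ψ n x = 1 := fun n hn =>
      hone n ⟨⟨x, hx⟩, compactCovering_subset U hn hN, rfl⟩
    simpa [hx] using tendsto_atTop_of_eventually_const heq
  · have heq : ∀ n, ψ n x = 0 := fun n =>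
      image_eq_zero_of_notMem_tsupport fun h => hx ((ψ n).tsupport_subset h)
    simp [hx, heq]

theorem exists_seq_testFunction_tendsto_sign {Ω : Opens E} {g : E → ℝ}
    (hg : ContinuousOn g Ω) :
    ∃ ψ : ℕ → 𝓓(Ω, ℝ), (∀ n x, |ψ n x| ≤ 1) ∧
      ∀ x ∈ Ω, Tendsto (fun n => ψ n x) atTop (𝓝 (SignType.sign (g x) : ℝ)) := by
  let P : Opens E := ⟨Ω ∩ g ⁻¹' Ioi 0, hg.isOpen_inter_preimage Ω.isOpen isOpen_Ioi⟩
  let Q : Opens E := ⟨Ω ∩ g ⁻¹' Iio 0, hg.isOpen_inter_preimage Ω.isOpen isOpen_Iio⟩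
  have hPΩ : P ≤ Ω := inter_subset_left
  have hQΩ : Q ≤ Ω := inter_subset_left
  obtain ⟨p, hp, hp_lim⟩ := exists_seq_testFunction_tendsto_indicator P
  obtain ⟨q, hq, hq_lim⟩ := exists_seq_testFunction_tendsto_indicator Q
  have hψ : ∀ n x, (TestFunction.monoCLM ℝ (p n) - TestFunction.monoCLM ℝ (q n) : 𝓓(Ω, ℝ)) x =
      p n x - q n x := fun n x => by simp [hPΩ, hQΩ]
  refine ⟨fun n => TestFunction.monoCLM ℝ (p n) - TestFunction.monoCLM ℝ (q n), fun n x => ?_,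
    fun x hx => ?_⟩
  · rw [hψ]
    exact abs_sub_le_of_nonneg_of_le (hp n x).1 (hp n x).2 (hq n x).1 (hq n x).2
  · simp_rw [hψ]
    convert (hp_lim x).sub (hq_lim x) using 2
    have hx' : x ∈ (Ω : Set E) := hx
    rcases lt_trichotomy (g x) 0 with h | h | h <;>
      simp [P, Q, indicator, hx', h, h.not_gt]

end Cutoff

section Duality

theorem abs_integral_mul_le_integral_abs {α : Type*} [MeasurableSpace α] {μ : Measure α}
    {g ψ : α → ℝ} (hg : Integrable g μ) (hψ : ∀ x, |ψ x| ≤ 1) :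
    |∫ x, g x * ψ x ∂μ| ≤ ∫ x, |g x| ∂μ :=
  norm_integral_le_of_norm_le (f := fun x => g x * ψ x) hg.abs <| .of_forall fun x =>
    (norm_mul _ _).trans_le (mul_le_of_le_one_right (abs_nonneg _) (hψ x))

theorem integrable_mul_testFunction {E : Type*} [NormedAddCommGroup E] [NormedSpace ℝ E]
    [MeasurableSpace E] [OpensMeasurableSpace E] {μ : Measure E} {Ω : Opens E} {g : E → ℝ}
    (hg : LocallyIntegrableOn g Ω μ) (ψ : 𝓓(Ω, ℝ)) : Integrable (fun x => g x * ψ x) μ := by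
  simpa only [ContinuousLinearMap.mul_apply', mul_comm] using
    ψ.integrable_bilin (ContinuousLinearMap.mul ℝ ℝ) hg

theorem exists_continuous_setIntegral_norm_sub_le {α F : Type*} [TopologicalSpace α]
    [NormalSpace α] [R1Space α] [WeaklyLocallyCompactSpace α] [MeasurableSpace α] [BorelSpace α]
    {μ : Measure α} [μ.Regular] [NormedAddCommGroup F] [NormedSpace ℝ F] {s : Set α}
    (hs : MeasurableSet s) {g : α → F} (hg : IntegrableOn g s μ) {ε : ℝ} (hε : 0 < ε) :
    ∃ h : α → F, Continuous h ∧ Integrable h μ ∧ ∫ x in s, ‖g x - h x‖ ∂μ ≤ ε := by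
  obtain ⟨h, -, hle, hcont, hint⟩ :=
    (hg.integrable_indicator hs).exists_hasCompactSupport_integral_sub_le hε
  refine ⟨h, hcont, hint, le_trans ?_ hle⟩
  calc ∫ x in s, ‖g x - h x‖ ∂μ = ∫ x in s, ‖s.indicator g x - h x‖ ∂μ :=
        setIntegral_congr_fun hs fun x hx => by simp only [indicator_of_mem hx]
    _ ≤ ∫ x, ‖s.indicator g x - h x‖ ∂μ :=
        setIntegral_le_integral ((hg.integrable_indicator hs).sub hint).norm
          (.of_forall fun x => norm_nonneg _)

variable {E : Type*} [NormedAddCommGroup E] [NormedSpace ℝ E] [FiniteDimensional ℝ E]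
  [MeasurableSpace E] [BorelSpace E] {μ : Measure E} {Ω : Opens E} {g : E → ℝ}

theorem exists_seq_testFunction_tendsto_setIntegral_abs
    (hgc : ContinuousOn g Ω) (hg : IntegrableOn g Ω μ) :
    ∃ ψ : ℕ → 𝓓(Ω, ℝ), (∀ n x, |ψ n x| ≤ 1) ∧
      Tendsto (fun n => ∫ x in Ω, g x * ψ n x ∂μ) atTop (𝓝 (∫ x in Ω, |g x| ∂μ)) := by
  obtain ⟨ψ, hψ, hlim⟩ := exists_seq_testFunction_tendsto_sign hgc
  refine ⟨ψ, hψ, tendsto_integral_of_dominated_convergence (fun x => |g x|)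
    (fun n => hg.aestronglyMeasurable.mul (ψ n).aestronglyMeasurable) hg.abs
    (fun n => .of_forall fun x => (norm_mul _ _).trans_le
      (mul_le_of_le_one_right (abs_nonneg _) (hψ n x))) ?_⟩
  filter_upwards [ae_restrict_mem Ω.isOpen.measurableSet] with x hx
  simpa only [self_mul_sign] using (hlim x hx).const_mul (g x)

theorem isLUB_setIntegral_mul_testFunction [IsLocallyFiniteMeasure μ] (hg : IntegrableOn g Ω μ) :
    IsLUB {r | ∃ ψ : 𝓓(Ω, ℝ), (∀ x, |ψ x| ≤ 1) ∧ r = ∫ x in Ω, g x * ψ x ∂μ}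
      (∫ x in Ω, |g x| ∂μ) := by
  constructor
  · rintro _ ⟨ψ, hψ, rfl⟩
    exact (le_abs_self _).trans (abs_integral_mul_le_integral_abs hg hψ)
  intro b hb
  refine le_of_forall_pos_le_add fun ε hε => ?_
  obtain ⟨h, hcont, hint, hgh⟩ :=
    exists_continuous_setIntegral_norm_sub_le Ω.isOpen.measurableSet hg (half_pos hε)
  have hsub : IntegrableOn (fun x => h x - g x) Ω μ := hint.integrableOn.sub hg
  have hhg : ∫ x in Ω, |h x - g x| ∂μ ≤ ε / 2 := by
    simpa only [Real.norm_eq_abs, abs_sub_comm] using hgh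
  obtain ⟨ψ, hψ, hlim⟩ :=
    exists_seq_testFunction_tendsto_setIntegral_abs hcont.continuousOn hint.integrableOn
  have hψ_le : ∀ n, ∫ x in Ω, h x * ψ n x ∂μ ≤ b + ε / 2 := fun n =>
    calc ∫ x in Ω, h x * ψ n x ∂μ
        = (∫ x in Ω, g x * ψ n x ∂μ) + ∫ x in Ω, (h x - g x) * ψ n x ∂μ := by
          rw [← integral_add
            (integrable_mul_testFunction hg.locallyIntegrableOn (ψ n)).integrableOn
            (integrable_mul_testFunction hsub.locallyIntegrableOn (ψ n)).integrableOn]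
          simp only [sub_mul, add_sub_cancel]
      _ ≤ b + ε / 2 := add_le_add (hb ⟨ψ n, hψ n, rfl⟩)
          ((le_abs_self _).trans <| (abs_integral_mul_le_integral_abs hsub (hψ n)).trans hhg)
  calc ∫ x in Ω, |g x| ∂μ ≤ ∫ x in Ω, (|h x| + |h x - g x|) ∂μ :=
        integral_mono hg.abs (hint.integrableOn.abs.add hsub.abs) fun x => by
          simpa only [sub_sub_cancel] using abs_sub (h x) (h x - g x)
    _ = (∫ x in Ω, |h x| ∂μ) + ∫ x in Ω, |h x - g x| ∂μ :=
        integral_add hint.integrableOn.abs hsub.abs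
    _ ≤ (b + ε / 2) + ε / 2 := add_le_add (le_of_tendsto' hlim hψ_le) hhg
    _ = b + ε := by ring

end Duality

section IntegrationByParts

variable {E : Type*} [NormedAddCommGroup E] [NormedSpace ℝ E] {Ω : Opens E}
  {ι : Type*} [Fintype ι]

theorem exists_testFunction_apply_eq (ψ : ι → 𝓓(Ω, ℝ)) :
    ∃ φ : 𝓓(Ω, EuclideanSpace ℝ ι), ∀ x i, φ x i = ψ i x := by
  classical
  refine ⟨∑ i, TestFunction.postcompCLM
    (ContinuousLinearMap.toSpanSingleton ℝ (EuclideanSpace.single i (1 : ℝ))) (ψ i), fun x i => ?_⟩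
  simp [Pi.single_apply]

theorem integrable_mul_fderiv_testFunction [MeasurableSpace E] [OpensMeasurableSpace E]
    {μ : Measure E} {f : E → ℝ} (hf : LocallyIntegrableOn f Ω μ) (ψ : 𝓓(Ω, ℝ)) (v : E) :
    Integrable (fun x => f x * fderiv ℝ ψ x v) μ := by
  have hψ : ∀ x, (TestFunction.lineDerivCLM ℝ v ψ : 𝓓(Ω, ℝ)) x = fderiv ℝ ψ x v := fun x => by
    rw [TestFunction.lineDerivCLM_eq_fderivCLM, TestFunction.fderivCLM_apply_of_le ψ le_top]
  simpa only [hψ] using integrable_mul_testFunction hf (TestFunction.lineDerivCLM ℝ v ψ)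

variable [MeasurableSpace E] [BorelSpace E] [FiniteDimensional ℝ E] {μ : Measure E}
  [μ.IsAddHaarMeasure] {f : E → ℝ}

theorem setIntegral_mul_fderiv_testFunction (hf : DifferentiableOn ℝ f Ω) {v : E}
    (hf' : LocallyIntegrableOn (fun x => fderiv ℝ f x v) Ω μ) (ψ : 𝓓(Ω, ℝ)) :
    ∫ x in Ω, f x * fderiv ℝ ψ x v ∂μ = -∫ x in Ω, fderiv ℝ f x v * ψ x ∂μ := by
  have hfi : LocallyIntegrableOn f Ω μ :=
    hf.continuousOn.locallyIntegrableOn Ω.isOpen.measurableSet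
  have hψ : ∀ x ∉ (Ω : Set E), ψ x = 0 := fun x hx =>
    image_eq_zero_of_notMem_tsupport fun h => hx (ψ.tsupport_subset h)
  have hψ' : ∀ x ∉ (Ω : Set E), fderiv ℝ ψ x = 0 := fun x hx =>
    image_eq_zero_of_notMem_tsupport fun h => hx (ψ.tsupport_subset (tsupport_fderiv_subset ℝ h))
  rw [setIntegral_eq_integral_of_forall_compl_eq_zero fun x hx => by simp [hψ' x hx],
    setIntegral_eq_integral_of_forall_compl_eq_zero fun x hx => by simp [hψ x hx]]
  exact integral_mul_fderiv_eq_neg_fderiv_mul_of_integrable (integrable_mul_testFunction hf' ψ)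
    (integrable_mul_fderiv_testFunction hfi ψ v) (integrable_mul_testFunction hfi ψ)
    (fun x hx => hf.differentiableAt (Ω.isOpen.mem_nhds (ψ.tsupport_subset hx)))
    (fun x _ => ψ.contDiff.differentiable (by simp) x)

theorem setIntegral_mul_sum_fderiv_testFunction (hf : DifferentiableOn ℝ f Ω) {v : ι → E}
    (hf' : ∀ i, LocallyIntegrableOn (fun x => fderiv ℝ f x (v i)) Ω μ)
    (φ : 𝓓(Ω, EuclideanSpace ℝ ι)) :
    ∫ x in Ω, f x * ∑ i, fderiv ℝ (fun y => φ y i) x (v i) ∂μ =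
      -∑ i, ∫ x in Ω, fderiv ℝ f x (v i) * φ x i ∂μ := by
  let ψ (i : ι) : 𝓓(Ω, ℝ) := TestFunction.postcompCLM (EuclideanSpace.proj (𝕜 := ℝ) i) φ
  have hfi : LocallyIntegrableOn f Ω μ :=
    hf.continuousOn.locallyIntegrableOn Ω.isOpen.measurableSet
  have hint : ∀ i, IntegrableOn (fun x => f x * fderiv ℝ (fun y => φ y i) x (v i)) Ω μ :=
    fun i => (integrable_mul_fderiv_testFunction hfi (ψ i) (v i)).integrableOn
  simp_rw [Finset.mul_sum]
  rw [integral_finsetSum _ fun i _ => hint i, ← Finset.sum_neg_distrib]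
  exact Finset.sum_congr rfl fun i _ => setIntegral_mul_fderiv_testFunction hf (hf' i) (ψ i)

end IntegrationByParts

theorem total_variation_of_differentiable_general {E ι : Type*} [NormedAddCommGroup E]
    [NormedSpace ℝ E] [FiniteDimensional ℝ E] [MeasurableSpace E] [BorelSpace E] {μ : Measure E}
    [μ.IsAddHaarMeasure] [Fintype ι] (v : ι → E) {Ω : Set E} (hΩ : IsOpen Ω) {f : E → ℝ}
    (hf : DifferentiableOn ℝ f Ω)
    (hf' : ∀ i, IntegrableOn (fun x => fderiv ℝ f x (v i)) Ω μ) :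
    IsLUB {r : ℝ |
        ∃ φ : E → EuclideanSpace ℝ ι,
          ContDiff ℝ (⊤ : ℕ∞) φ ∧ HasCompactSupport φ ∧ tsupport φ ⊆ Ω ∧
          (∀ x, ∀ i, |φ x i| ≤ 1) ∧
          r = ∫ x in Ω, f x * ∑ i, fderiv ℝ (fun y => φ y i) x (v i) ∂μ}
      (∑ i, ∫ x in Ω, |fderiv ℝ f x (v i)| ∂μ) := by
  lift Ω to Opens E using hΩ
  have parts := setIntegral_mul_sum_fderiv_testFunction hf fun i => (hf' i).locallyIntegrableOn
  constructor
  · rintro _ ⟨φ, hφ, hφc, hφΩ, hφ_le, rfl⟩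
    refine (parts ⟨φ, hφ, hφc, hφΩ⟩).trans_le ?_
    rw [← Finset.sum_neg_distrib]
    exact Finset.sum_le_sum fun i _ => (neg_le_abs _).trans
      (abs_integral_mul_le_integral_abs (hf' i) (hφ_le · i))
  · intro b hb
    have hdual := fun i => isLUB_setIntegral_mul_testFunction (hf' i)
    choose u _ _ hu hmem using fun i => (hdual i).exists_seq_monotone_tendsto (hdual i).nonempty
    choose ψ hψ hint using hmem
    refine le_of_tendsto' (tendsto_finsetSum _ fun i _ => hu i) fun n => ?_
    obtain ⟨φ, hφ⟩ := exists_testFunction_apply_eq fun i => -ψ i n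
    refine hb ⟨φ, φ.contDiff, φ.hasCompactSupport, φ.tsupport_subset, fun x i => ?_, ?_⟩
    · simpa [hφ] using hψ i n x
    · rw [parts φ]
      simp [hφ, hint, integral_neg]

/-- For an open set `Ω ⊆ ℝ^N` and `f` continuously differentiable on `Ω` with `f` and all
its partial derivatives integrable on `Ω`, the total variation
`V(f; Ω) = sup { ∫_Ω f · div φ : φ ∈ C_c^∞(Ω, ℝ^N), ‖φ‖_∞ ≤ 1 }`
equals `∑_{d} ∫_Ω |∂f/∂x_d|`. -/
theorem total_variation_of_differentiable
    (N : ℕ) (Ω : Set (EuclideanSpace ℝ (Fin N))) (hΩ : IsOpen Ω)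
    (f : EuclideanSpace ℝ (Fin N) → ℝ)
    (hf : ContDiffOn ℝ 1 f Ω)
    (hfi : IntegrableOn f Ω)
    (hfi' : ∀ d : Fin N,
      IntegrableOn (fun x => fderiv ℝ f x (EuclideanSpace.single d 1)) Ω) :
    sSup {r : ℝ |
        ∃ φ : EuclideanSpace ℝ (Fin N) → EuclideanSpace ℝ (Fin N),
          ContDiff ℝ (⊤ : ℕ∞) φ ∧ HasCompactSupport φ ∧ tsupport φ ⊆ Ω ∧
          (∀ x, ∀ d : Fin N, |φ x d| ≤ 1) ∧
          r = ∫ x in Ω,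
                f x * ∑ d : Fin N, fderiv ℝ (fun y => φ y d) x (EuclideanSpace.single d 1)} =
      ∑ d : Fin N, ∫ x in Ω, |fderiv ℝ f x (EuclideanSpace.single d 1)| := by
  have h := total_variation_of_differentiable_general (fun d => EuclideanSpace.single d 1) hΩ
    (hf.differentiableOn one_ne_zero) hfi'
  exact h.csSup_eq h.nonempty
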